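/- There exists a continuous, strictly positive linear functional on L⁰(λ) — i.e. a continuous linear φ with φ(f)≥0 for all f∈L⁰(λ)₊ and φ(f)>0 whenever f∈L⁰(λ)₊ satisfies |λ|*(f>c)>0 for some c>0 — if and only if λ∈ba₀(𝒜). -/

import Mathlib

open Set Filter Topology

namespace FA

/-- An algebra of subsets of `Ω`. -/
structure SetAlg (Ω : Type*) where
  sets : Set (Set Ω)
  empty_mem : ∅ ∈ sets
  compl_mem : ∀ ⦃A⦄, A ∈ sets → Aᶜ ∈ sets
  union_mem : ∀ ⦃A B⦄, A ∈ sets → B ∈ sets → A ∪ B ∈ sets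

/-- A bounded, finitely additive real-valued set function on the algebra `𝒜`,
i.e. an element of `ba(𝒜)`. -/
structure BAMeasure {Ω : Type*} (𝒜 : SetAlg Ω) where
  toFun : Set Ω → ℝ
  map_empty : toFun ∅ = 0
  additive : ∀ ⦃A B : Set Ω⦄, A ∈ 𝒜.sets → B ∈ 𝒜.sets → Disjoint A B →
      toFun (A ∪ B) = toFun A + toFun B
  bounded : ∃ M : ℝ, ∀ A ∈ 𝒜.sets, |toFun A| ≤ M

variable {Ω : Type*} {𝒜 : SetAlg Ω}

/-- Total variation `|λ|(A) = λ⁺(A) + λ⁻(A)`. -/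
noncomputable def var (lam : BAMeasure 𝒜) (A : Set Ω) : ℝ :=
  sSup {x | ∃ B ∈ 𝒜.sets, B ⊆ A ∧ x = lam.toFun B} +
  sSup {x | ∃ B ∈ 𝒜.sets, B ⊆ A ∧ x = -lam.toFun B}

/-- The outer measure `|λ|*(B) = inf {|λ|(A) : A ∈ 𝒜, B ⊆ A}`. -/
noncomputable def outer (lam : BAMeasure 𝒜) (B : Set Ω) : ℝ :=
  sInf {x | ∃ A ∈ 𝒜.sets, B ⊆ A ∧ x = var lam A}

/-- `𝒜`-simple functions. -/
def IsSimple (𝒜 : SetAlg Ω) (f : Ω → ℝ) : Prop :=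
  (Set.range f).Finite ∧ ∀ r : ℝ, f ⁻¹' {r} ∈ 𝒜.sets

/-- `λ`-convergence: `(f n)` converges to `g` in `λ`-measure. -/
def LConv (lam : BAMeasure 𝒜) (f : ℕ → Ω → ℝ) (g : Ω → ℝ) : Prop :=
  ∀ c > (0:ℝ), Tendsto (fun n => outer lam {ω | c < |f n ω - g ω|}) atTop (𝓝 0)

/-- `λ`-Cauchy sequences. -/
def LCauchy (lam : BAMeasure 𝒜) (f : ℕ → Ω → ℝ) : Prop :=
  ∀ c > (0:ℝ), ∀ ε > (0:ℝ), ∃ N : ℕ, ∀ p q : ℕ,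
    outer lam {ω | c < |f (N + p) ω - f (N + q) ω|} < ε

/-- `L⁰(λ)`: `λ`-limits of sequences of `𝒜`-simple functions. -/
def L0 (lam : BAMeasure 𝒜) : Set (Ω → ℝ) :=
  {f | ∃ s : ℕ → Ω → ℝ, (∀ n, IsSimple 𝒜 (s n)) ∧ LConv lam s f}

/-- The metric of `L⁰(λ)`: `d(f,g) = inf {c + |λ|*(|f-g| ≥ c) : c > 0}`. -/
noncomputable def dL0 (lam : BAMeasure 𝒜) (f g : Ω → ℝ) : ℝ :=
  sInf {x | ∃ c > (0:ℝ), x = c + outer lam {ω | c ≤ |f ω - g ω|}}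

/-- A set `K` is bounded in `L⁰(λ)` if `lim_{c→∞} sup_{f∈K} |λ|*(|f|>c) = 0`. -/
def BddL0 (lam : BAMeasure 𝒜) (K : Set (Ω → ℝ)) : Prop :=
  ∀ ε > (0:ℝ), ∃ c₀ : ℝ, ∀ c ≥ c₀, ∀ f ∈ K, outer lam {ω | c < |f ω|} < ε

/-- The nonnegative elements of `L⁰(λ)`. -/
def L0pos (lam : BAMeasure 𝒜) : Set (Ω → ℝ) := {f ∈ L0 lam | ∀ ω, 0 ≤ f ω}

/-- The elementary integral of a simple function with respect to a set function. -/
noncomputable def simpleIntegral (m : Set Ω → ℝ) (f : Ω → ℝ) : ℝ :=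
  ∑ᶠ r : ℝ, r * m (f ⁻¹' {r})

/-- Dunford–Schwartz integrability: there is a sequence of simple functions converging to `f`
in `λ`-measure which is Cauchy in mean. -/
def MemL1 (lam : BAMeasure 𝒜) (f : Ω → ℝ) : Prop :=
  ∃ s : ℕ → Ω → ℝ, (∀ n, IsSimple 𝒜 (s n)) ∧ LConv lam s f ∧
    ∀ ε > (0:ℝ), ∃ N : ℕ, ∀ m ≥ N, ∀ n ≥ N,
      simpleIntegral (var lam) (fun ω => |s m ω - s n ω|) < ε

/-- `L¹(λ)`. -/
def L1 (lam : BAMeasure 𝒜) : Set (Ω → ℝ) := {f | MemL1 lam f}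

open scoped Classical in
/-- The Dunford–Schwartz integral `∫ f dλ`. -/
noncomputable def integral (lam : BAMeasure 𝒜) (f : Ω → ℝ) : ℝ :=
  if h : MemL1 lam f then
    limUnder atTop (fun n => simpleIntegral lam.toFun (h.choose n))
  else 0

open scoped Classical in
/-- The `L¹(λ)` seminorm `∫ |f| d|λ|`. -/
noncomputable def l1Norm (lam : BAMeasure 𝒜) (f : Ω → ℝ) : ℝ :=
  if h : MemL1 lam f then
    limUnder atTop (fun n => simpleIntegral (var lam) (fun ω => |h.choose n ω|))
  else 0

/-- A set is bounded in `L¹(μ)` if the integrals `∫|f| d|μ|` are uniformly bounded. -/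
def BddL1 (mu : BAMeasure 𝒜) (K : Set (Ω → ℝ)) : Prop :=
  ∃ M : ℝ, ∀ f ∈ K, l1Norm mu f ≤ M

/-- Finitely additive probability measures. -/
def IsFAProb (mu : BAMeasure 𝒜) : Prop :=
  mu.toFun Set.univ = 1 ∧ ∀ A ∈ 𝒜.sets, 0 ≤ mu.toFun A

/-- `μ ∈ 𝔓_*(λ)`: a finitely additive probability with `|μ| ≤ c |λ|` and the same null
sets as `λ`. -/
def PStar (lam mu : BAMeasure 𝒜) : Prop :=
  IsFAProb mu ∧ (∃ c : ℝ, 0 ≤ c ∧ ∀ A ∈ 𝒜.sets, var mu A ≤ c * var lam A) ∧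
  ∀ A ∈ 𝒜.sets, (mu.toFun A = 0 ↔ var lam A = 0)

/-- `μ ∈ 𝔓_*(λ; K)`. -/
def PStarWith (lam : BAMeasure 𝒜) (K : Set (Ω → ℝ)) (mu : BAMeasure 𝒜) : Prop :=
  PStar lam mu ∧ K ⊆ L1 mu ∧ BddL1 mu K

/-- `f` is a `λ`-a.s. lower bound of `K`. -/
def ASLowerBound (lam : BAMeasure 𝒜) (f : Ω → ℝ) (K : Set (Ω → ℝ)) : Prop :=
  ∀ c > (0:ℝ), ∀ k ∈ K, outer lam {ω | k ω < f ω - c} = 0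

/-- Absolute continuity `μ ≪ λ` for bounded finitely additive set functions. -/
def AbsCont (mu lam : BAMeasure 𝒜) : Prop :=
  ∀ ε > (0:ℝ), ∃ δ > (0:ℝ), ∀ A ∈ 𝒜.sets, var lam A < δ → var mu A < ε

/-- `λ ∈ ba₀(𝒜)`: the range of `λ` is finite. -/
def FiniteRange (lam : BAMeasure 𝒜) : Prop := (lam.toFun '' 𝒜.sets).Finite

/-- `μ ∈ ba₀(λ)`. -/
def BA0rel (lam mu : BAMeasure 𝒜) : Prop := FiniteRange mu ∧ AbsCont mu lam

/-- Strong continuity: arbitrarily fine finite partitions. -/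
def StronglyContinuous (lam : BAMeasure 𝒜) : Prop :=
  ∀ ε > (0:ℝ), ∃ (N : ℕ) (A : Fin N → Set Ω), (∀ n, A n ∈ 𝒜.sets) ∧
    Pairwise (Function.onFun Disjoint A) ∧ (⋃ n, A n) = Set.univ ∧
    ∀ n, var lam (A n) < ε

/-- Orthogonality of bounded finitely additive set functions. -/
def Orthogonal (mu nu : BAMeasure 𝒜) : Prop :=
  ∀ ε > (0:ℝ), ∃ A ∈ 𝒜.sets, var mu A < ε ∧ var nu Aᶜ < ε

/-- Strong discontinuity: orthogonal to every strongly continuous element of `ba(𝒜)`. -/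
def StronglyDiscontinuous (mu : BAMeasure 𝒜) : Prop :=
  ∀ nu : BAMeasure 𝒜, StronglyContinuous nu → Orthogonal mu nu

/-- Countable additivity of `λ` on the algebra `𝒜`. -/
def CountablyAdditive (lam : BAMeasure 𝒜) : Prop :=
  ∀ A : ℕ → Set Ω, (∀ n, A n ∈ 𝒜.sets) → Pairwise (Function.onFun Disjoint A) →
    (⋃ n, A n) ∈ 𝒜.sets → HasSum (fun n => lam.toFun (A n)) (lam.toFun (⋃ n, A n))

/-- `𝒜` is a σ-algebra. -/
def IsSigmaAlg (𝒜 : SetAlg Ω) : Prop :=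
  ∀ A : ℕ → Set Ω, (∀ n, A n ∈ 𝒜.sets) → (⋃ n, A n) ∈ 𝒜.sets

/-- Linearity of a functional on `L⁰(λ)`. -/
def LinearOnL0 (lam : BAMeasure 𝒜) (φ : (Ω → ℝ) → ℝ) : Prop :=
  (∀ f ∈ L0 lam, ∀ g ∈ L0 lam, φ (f + g) = φ f + φ g) ∧
  (∀ a : ℝ, ∀ f ∈ L0 lam, φ (a • f) = a * φ f)

/-- Continuity of a functional on `L⁰(λ)` with respect to the metric `d`. -/
def ContinuousOnL0 (lam : BAMeasure 𝒜) (φ : (Ω → ℝ) → ℝ) : Prop :=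
  ∀ f ∈ L0 lam, ∀ ε > (0:ℝ), ∃ δ > (0:ℝ), ∀ g ∈ L0 lam, dL0 lam g f < δ → |φ g - φ f| < ε

/-!
The variation `|λ|` has a *gap* if its values do not accumulate at `0`. A gap lets one split `Ω`
repeatedly until it is a finite union of atoms of `|λ|` and a null set, and such a `λ` has finite
range; conversely finite range clearly forces a gap.

A continuous, strictly positive functional `φ` forces a gap: if `0 < |λ|(A)` is small, then every
multiple of `1_A` is close to `0`, yet `φ` takes the value `1` on one of them. In the other
direction, every `f ∈ L⁰(λ)` is almost constant on an atom, so it has a limit along the filter of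
sets of full measure in that atom; adding these limits over finitely many atoms that exhaust `Ω`
gives the functional.
-/

lemma SetAlg.isSetAlgebra (𝒜 : SetAlg Ω) : MeasureTheory.IsSetAlgebra 𝒜.sets :=
  ⟨𝒜.empty_mem, 𝒜.compl_mem, 𝒜.union_mem⟩

lemma IsSimple.indicator_const {A : Set Ω} (hA : A ∈ 𝒜.sets) (a : ℝ) :
    IsSimple 𝒜 (A.indicator fun _ => a) := by
  classical
  refine ⟨(toFinite {a, 0}).subset ?_, fun r => ?_⟩
  · rintro _ ⟨ω, rfl⟩
    exact indicator_eq_zero_or_self A _ ω |>.symm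
  · rw [indicator_const_preimage_eq_union]
    refine 𝒜.union_mem ?_ ?_ <;> split_ifs
    exacts [hA, 𝒜.empty_mem, 𝒜.compl_mem hA, 𝒜.empty_mem]

/-! ### Values and total variation -/

section Variation

instance : Neg (BAMeasure 𝒜) where
  neg lam :=
    { toFun := fun A => -lam.toFun A
      map_empty := by rw [lam.map_empty, neg_zero]
      additive := fun A B hA hB hAB => by rw [lam.additive hA hB hAB, neg_add]
      bounded := by simpa only [abs_neg] using lam.bounded }

/-- The set of values of `λ` on the members of `𝒜` contained in `A`; its supremum is `λ⁺(A)`. -/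
def valuesOn (lam : BAMeasure 𝒜) (A : Set Ω) : Set ℝ :=
  {x | ∃ B ∈ 𝒜.sets, B ⊆ A ∧ x = lam.toFun B}

variable (lam : BAMeasure 𝒜) {A B : Set Ω}

lemma var_eq_sSup_add_sSup (A : Set Ω) :
    var lam A = sSup (valuesOn lam A) + sSup (valuesOn (-lam) A) := rfl

lemma zero_mem_valuesOn (A : Set Ω) : 0 ∈ valuesOn lam A :=
  ⟨∅, 𝒜.empty_mem, empty_subset A, lam.map_empty.symm⟩

lemma apply_mem_valuesOn (hA : A ∈ 𝒜.sets) : lam.toFun A ∈ valuesOn lam A :=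
  ⟨A, hA, subset_rfl, rfl⟩

lemma bddAbove_valuesOn (A : Set Ω) : BddAbove (valuesOn lam A) := by
  obtain ⟨M, hM⟩ := lam.bounded
  refine ⟨M, ?_⟩
  rintro _ ⟨B, hB, -, rfl⟩
  exact (le_abs_self _).trans (hM B hB)

lemma sSup_valuesOn_nonneg (A : Set Ω) : 0 ≤ sSup (valuesOn lam A) :=
  le_csSup (bddAbove_valuesOn lam A) (zero_mem_valuesOn lam A)

open scoped Pointwise in
lemma valuesOn_union (hA : A ∈ 𝒜.sets) (hB : B ∈ 𝒜.sets) (hAB : Disjoint A B) :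
    valuesOn lam (A ∪ B) = valuesOn lam A + valuesOn lam B := by
  apply Subset.antisymm
  · rintro _ ⟨D, hD, hDAB, rfl⟩
    have hDA := 𝒜.isSetAlgebra.inter_mem hD hA
    have hDB := 𝒜.isSetAlgebra.inter_mem hD hB
    refine ⟨_, ⟨D ∩ A, hDA, inter_subset_right, rfl⟩,
      _, ⟨D ∩ B, hDB, inter_subset_right, rfl⟩, ?_⟩
    beta_reduce
    rw [← lam.additive hDA hDB (hAB.mono inter_subset_right inter_subset_right),
      ← inter_union_distrib_left, inter_eq_left.2 hDAB]
  · rintro _ ⟨_, ⟨D, hD, hDA, rfl⟩, _, ⟨E, hE, hEB, rfl⟩, rfl⟩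
    exact ⟨D ∪ E, 𝒜.union_mem hD hE, union_subset_union hDA hEB,
      (lam.additive hD hE (hAB.mono hDA hEB)).symm⟩

lemma valuesOn_univ : valuesOn lam univ = lam.toFun '' 𝒜.sets := by
  ext x
  simp only [valuesOn, subset_univ, true_and, mem_ofPred_eq, mem_image, eq_comm]

lemma sSup_valuesOn_union (hA : A ∈ 𝒜.sets) (hB : B ∈ 𝒜.sets) (hAB : Disjoint A B) :
    sSup (valuesOn lam (A ∪ B)) = sSup (valuesOn lam A) + sSup (valuesOn lam B) := by
  rw [valuesOn_union lam hA hB hAB]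
  exact csSup_add ⟨0, zero_mem_valuesOn lam A⟩ (bddAbove_valuesOn lam A)
    ⟨0, zero_mem_valuesOn lam B⟩ (bddAbove_valuesOn lam B)

lemma var_union (hA : A ∈ 𝒜.sets) (hB : B ∈ 𝒜.sets) (hAB : Disjoint A B) :
    var lam (A ∪ B) = var lam A + var lam B := by
  simp only [var_eq_sSup_add_sSup, sSup_valuesOn_union _ hA hB hAB]
  ring

lemma var_nonneg (A : Set Ω) : 0 ≤ var lam A :=
  add_nonneg (sSup_valuesOn_nonneg lam A) (sSup_valuesOn_nonneg (-lam) A)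

lemma abs_apply_le_var (hA : A ∈ 𝒜.sets) : |lam.toFun A| ≤ var lam A := by
  rw [var_eq_sSup_add_sSup, abs_le']
  constructor
  · exact (le_csSup (bddAbove_valuesOn lam A) (apply_mem_valuesOn lam hA)).trans
      (le_add_of_nonneg_right (sSup_valuesOn_nonneg _ A))
  · exact (le_csSup (bddAbove_valuesOn (-lam) A) (apply_mem_valuesOn (-lam) hA)).trans
      (le_add_of_nonneg_left (sSup_valuesOn_nonneg _ A))

lemma var_empty : var lam ∅ = 0 := by
  simpa only [union_self, left_eq_add] using
    var_union lam 𝒜.empty_mem 𝒜.empty_mem (disjoint_empty ∅)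

lemma var_inter_add_sdiff (hA : A ∈ 𝒜.sets) (hB : B ∈ 𝒜.sets) :
    var lam (A ∩ B) + var lam (A \ B) = var lam A := by
  rw [← var_union lam (𝒜.isSetAlgebra.inter_mem hA hB) (𝒜.isSetAlgebra.sdiff_mem hA hB)
    (disjoint_sdiff_right.mono_left inter_subset_right), inter_union_sdiff]

lemma var_mono (hA : A ∈ 𝒜.sets) (hB : B ∈ 𝒜.sets) (hAB : A ⊆ B) : var lam A ≤ var lam B := by
  rw [← var_inter_add_sdiff lam hB hA, inter_eq_right.2 hAB]
  exact le_add_of_nonneg_right (var_nonneg lam _)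

lemma var_union_le (hA : A ∈ 𝒜.sets) (hB : B ∈ 𝒜.sets) :
    var lam (A ∪ B) ≤ var lam A + var lam B := by
  have hBA := 𝒜.isSetAlgebra.sdiff_mem hB hA
  rw [← union_sdiff_self, var_union lam hA hBA disjoint_sdiff_right]
  gcongr
  exact var_mono lam hBA hB sdiff_subset

variable {lam}

lemma FiniteRange.neg (hlam : FiniteRange lam) : FiniteRange (-lam) := by
  have hneg := hlam.image Neg.neg
  rwa [image_image] at hneg

lemma FiniteRange.sSup_valuesOn_mem (hlam : FiniteRange lam) (A : Set Ω) :
    sSup (valuesOn lam A) ∈ lam.toFun '' 𝒜.sets := by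
  have hsub : valuesOn lam A ⊆ lam.toFun '' 𝒜.sets := by
    rintro _ ⟨B, hB, -, rfl⟩
    exact mem_image_of_mem _ hB
  exact hsub (Set.Nonempty.csSup_mem ⟨0, zero_mem_valuesOn lam A⟩ (hlam.subset hsub))

lemma FiniteRange.finite_image_var (hlam : FiniteRange lam) : (var lam '' 𝒜.sets).Finite := by
  refine (hlam.image2 (· + ·) hlam.neg).subset ?_
  rintro _ ⟨A, -, rfl⟩
  exact mem_image2_of_mem (hlam.sSup_valuesOn_mem A) (hlam.neg.sSup_valuesOn_mem A)

end Variation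

/-! ### Outer measure and the metric of `L⁰(λ)` -/

section Outer

variable (lam : BAMeasure 𝒜) {A B : Set Ω}

lemma outer_nonneg (B : Set Ω) : 0 ≤ outer lam B := by
  refine Real.sInf_nonneg ?_
  rintro _ ⟨A, -, -, rfl⟩
  exact var_nonneg lam A

lemma outer_le_var (hA : A ∈ 𝒜.sets) (hBA : B ⊆ A) : outer lam B ≤ var lam A := by
  refine csInf_le ⟨0, ?_⟩ ⟨A, hA, hBA, rfl⟩
  rintro _ ⟨A, -, -, rfl⟩
  exact var_nonneg lam A

lemma exists_var_lt_of_outer_lt {δ : ℝ} (h : outer lam B < δ) :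
    ∃ A ∈ 𝒜.sets, B ⊆ A ∧ var lam A < δ := by
  have hne : {x | ∃ A ∈ 𝒜.sets, B ⊆ A ∧ x = var lam A}.Nonempty :=
    ⟨_, univ, 𝒜.isSetAlgebra.univ_mem, subset_univ B, rfl⟩
  obtain ⟨_, ⟨A, hA, hBA, rfl⟩, hlt⟩ := exists_lt_of_csInf_lt hne h
  exact ⟨A, hA, hBA, hlt⟩

lemma outer_mono (hAB : A ⊆ B) : outer lam A ≤ outer lam B := by
  refine le_of_forall_gt fun δ hδ => ?_
  obtain ⟨D, hD, hBD, hlt⟩ := exists_var_lt_of_outer_lt lam hδ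
  exact (outer_le_var lam hD (hAB.trans hBD)).trans_lt hlt

lemma outer_eq_var (hA : A ∈ 𝒜.sets) : outer lam A = var lam A := by
  refine (outer_le_var lam hA subset_rfl).antisymm (le_of_forall_gt fun δ hδ => ?_)
  obtain ⟨D, hD, hAD, hlt⟩ := exists_var_lt_of_outer_lt lam hδ
  exact (var_mono lam hA hD hAD).trans_lt hlt

lemma outer_empty : outer lam ∅ = 0 := by
  rw [outer_eq_var lam 𝒜.empty_mem, var_empty]

lemma outer_union_le (A B : Set Ω) : outer lam (A ∪ B) ≤ outer lam A + outer lam B := by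
  refine le_of_forall_pos_lt_add fun ε hε => ?_
  obtain ⟨D, hD, hAD, hDlt⟩ :=
    exists_var_lt_of_outer_lt lam (lt_add_of_pos_right (outer lam A) (half_pos hε))
  obtain ⟨E, hE, hBE, hElt⟩ :=
    exists_var_lt_of_outer_lt lam (lt_add_of_pos_right (outer lam B) (half_pos hε))
  calc outer lam (A ∪ B)
      ≤ var lam (D ∪ E) := outer_le_var lam (𝒜.union_mem hD hE) (union_subset_union hAD hBE)
    _ ≤ var lam D + var lam E := var_union_le lam hD hE
    _ < outer lam A + outer lam B + ε := by linarith

lemma dL0_le_outer_ne (f g : Ω → ℝ) : dL0 lam f g ≤ outer lam {ω | f ω ≠ g ω} := by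
  refine le_of_forall_pos_le_add fun c hc => ?_
  have hle : dL0 lam f g ≤ c + outer lam {ω | c ≤ |f ω - g ω|} := by
    refine csInf_le ⟨0, ?_⟩ ⟨c, hc, rfl⟩
    rintro _ ⟨c, hc, rfl⟩
    exact add_nonneg hc.le (outer_nonneg lam _)
  have hsub : {ω | c ≤ |f ω - g ω|} ⊆ {ω | f ω ≠ g ω} := fun ω hω =>
    sub_ne_zero.1 (abs_pos.1 (hc.trans_le hω))
  linarith [outer_mono lam hsub]

lemma exists_add_outer_lt_of_dL0_lt {f g : Ω → ℝ} {δ : ℝ} (h : dL0 lam f g < δ) :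
    ∃ c > 0, c + outer lam {ω | c ≤ |f ω - g ω|} < δ := by
  have hne : {x | ∃ c > 0, x = c + outer lam {ω | c ≤ |f ω - g ω|}}.Nonempty :=
    ⟨_, 1, one_pos, rfl⟩
  obtain ⟨_, ⟨c, hc, rfl⟩, hlt⟩ := exists_lt_of_csInf_lt hne h
  exact ⟨c, hc, hlt⟩

lemma IsSimple.mem_L0 {f : Ω → ℝ} (hf : IsSimple 𝒜 f) : f ∈ L0 lam := by
  refine ⟨fun _ => f, fun _ => hf, fun c hc => ?_⟩
  simp only [sub_self, abs_zero, hc.not_gt, ← empty_def, outer_empty, tendsto_const_nhds]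

lemma zero_mem_L0 : (0 : Ω → ℝ) ∈ L0 lam := by
  simpa only [indicator_empty'] using (IsSimple.indicator_const 𝒜.empty_mem 0).mem_L0 lam

end Outer

/-! ### Atoms -/

section Atoms

variable {lam : BAMeasure 𝒜} {A B C : Set Ω}

/-- `C` is an atom of `|λ|`: a non-null member of `𝒜` that does not split into two non-null members
of `𝒜`. -/
structure IsVarAtom (lam : BAMeasure 𝒜) (C : Set Ω) : Prop where
  mem : C ∈ 𝒜.sets
  var_pos : 0 < var lam C
  null_or_null_sdiff : ∀ B ∈ 𝒜.sets, B ⊆ C → var lam B = 0 ∨ var lam (C \ B) = 0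

/-- `A` is finitely atomic: a finite disjoint union of atoms of `|λ|` and null members of `𝒜`. -/
inductive FinitelyAtomic (lam : BAMeasure 𝒜) : Set Ω → Prop
  | null {A : Set Ω} (hA : A ∈ 𝒜.sets) (hnull : var lam A = 0) : FinitelyAtomic lam A
  | atom {C : Set Ω} (hC : IsVarAtom lam C) : FinitelyAtomic lam C
  | union {A B : Set Ω} (hA : FinitelyAtomic lam A) (hB : FinitelyAtomic lam B)
      (hAB : Disjoint A B) : FinitelyAtomic lam (A ∪ B)

/-- The values of `|λ|` on `𝒜` do not accumulate at `0`. -/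
def HasVariationGap (lam : BAMeasure 𝒜) : Prop :=
  ∃ δ > 0, ∀ A ∈ 𝒜.sets, var lam A < δ → var lam A = 0

lemma FinitelyAtomic.mem (hA : FinitelyAtomic lam A) : A ∈ 𝒜.sets := by
  induction hA with
  | null hA _ => exact hA
  | atom hC => exact hC.mem
  | union _ _ _ hA hB => exact 𝒜.union_mem hA hB

lemma apply_eq_zero_of_subset_null (hA : A ∈ 𝒜.sets) (hnull : var lam A = 0) (hB : B ∈ 𝒜.sets)
    (hBA : B ⊆ A) : lam.toFun B = 0 :=
  abs_nonpos_iff.1 <| (abs_apply_le_var lam hB).trans <| (var_mono lam hB hA hBA).trans hnull.le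

lemma IsVarAtom.apply_eq_zero_or (hC : IsVarAtom lam C) (hB : B ∈ 𝒜.sets) (hBC : B ⊆ C) :
    lam.toFun B = 0 ∨ lam.toFun B = lam.toFun C := by
  refine (hC.null_or_null_sdiff B hB hBC).imp
    (fun hnull => apply_eq_zero_of_subset_null hB hnull hB subset_rfl) fun hnull => ?_
  have hCB := 𝒜.isSetAlgebra.sdiff_mem hC.mem hB
  have hadd := lam.additive hB hCB disjoint_sdiff_right
  rw [union_sdiff_cancel hBC, apply_eq_zero_of_subset_null hCB hnull hCB subset_rfl,
    add_zero] at hadd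
  exact hadd.symm

lemma FinitelyAtomic.finite_valuesOn (hA : FinitelyAtomic lam A) : (valuesOn lam A).Finite := by
  induction hA with
  | null hA hnull =>
    refine (finite_singleton 0).subset ?_
    rintro _ ⟨B, hB, hBA, rfl⟩
    exact apply_eq_zero_of_subset_null hA hnull hB hBA
  | @atom C hC =>
    refine (toFinite {0, lam.toFun C}).subset ?_
    rintro _ ⟨B, hB, hBC, rfl⟩
    exact hC.apply_eq_zero_or hB hBC
  | union hA hB hAB ihA ihB =>
    rw [valuesOn_union lam hA.mem hB.mem hAB]
    exact ihA.add ihB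

lemma FiniteRange.hasVariationGap (hlam : FiniteRange lam) : HasVariationGap lam := by
  have hclosed : IsClosed (var lam '' 𝒜.sets \ {0}) := hlam.finite_image_var.sdiff.isClosed
  obtain ⟨δ, hδ, hball⟩ := Metric.isOpen_iff.1 hclosed.isOpen_compl 0 fun h => h.2 rfl
  refine ⟨δ, hδ, fun A hA hlt => by_contra fun hne => ?_⟩
  have hmem : var lam A ∈ Metric.ball 0 δ := by
    rwa [mem_ball_zero_iff, Real.norm_of_nonneg (var_nonneg lam A)]
  exact hball hmem ⟨mem_image_of_mem _ hA, hne⟩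

lemma exists_split_of_not_finitelyAtomic (hA : A ∈ 𝒜.sets) (hnot : ¬FinitelyAtomic lam A) :
    ∃ B ∈ 𝒜.sets, B ⊆ A ∧ var lam B ≠ 0 ∧ var lam (A \ B) ≠ 0 := by
  have hne : var lam A ≠ 0 := fun hnull => hnot (.null hA hnull)
  by_contra! hsplit
  exact hnot (.atom ⟨hA, (var_nonneg lam A).lt_of_ne' hne,
    fun B hB hBA => or_iff_not_imp_left.2 (hsplit B hB hBA)⟩)

lemma HasVariationGap.finitelyAtomic (hlam : HasVariationGap lam) (hA : A ∈ 𝒜.sets) :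
    FinitelyAtomic lam A := by
  obtain ⟨δ, hδ, hgap⟩ := hlam
  obtain ⟨n, hn⟩ := exists_nat_gt (var lam A / δ)
  rw [div_lt_iff₀ hδ] at hn
  induction n generalizing A with
  | zero => exact absurd hn (by simpa using var_nonneg lam A)
  | succ n ih =>
    by_contra hnot
    obtain ⟨B, hB, hBA, hBne, hABne⟩ := exists_split_of_not_finitelyAtomic hA hnot
    have hAB := 𝒜.isSetAlgebra.sdiff_mem hA hB
    have hδB : δ ≤ var lam B := not_lt.1 (mt (hgap B hB) hBne)
    have hδAB : δ ≤ var lam (A \ B) := not_lt.1 (mt (hgap _ hAB) hABne)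
    have hsum := var_inter_add_sdiff lam hA hB
    rw [inter_eq_right.2 hBA] at hsum
    push_cast at hn
    have hunion := (ih hB (by linarith)).union (ih hAB (by linarith)) disjoint_sdiff_right
    rw [union_sdiff_cancel hBA] at hunion
    exact hnot hunion

end Atoms

/-! ### Limits along atoms -/

section Limits

variable {lam : BAMeasure 𝒜} {C : Set Ω} {f g : Ω → ℝ}

/-- The filter of sets that contain `|λ|`-almost all of `C`. -/
def aeOn (lam : BAMeasure 𝒜) (C : Set Ω) : Filter Ω :=
  comk (fun N => outer lam (N ∩ C) = 0)
    (by rw [empty_inter, outer_empty])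
    (fun N hN M hMN => ((outer_mono lam (inter_subset_inter_left C hMN)).trans_eq hN).antisymm
      (outer_nonneg lam _))
    (fun M hM N hN => by
      refine le_antisymm ?_ (outer_nonneg lam _)
      simpa only [union_inter_distrib_right, hM, hN, add_zero] using
        outer_union_le lam (M ∩ C) (N ∩ C))

lemma eventually_aeOn {p : Ω → Prop} :
    (∀ᶠ ω in aeOn lam C, p ω) ↔ outer lam ({ω | ¬p ω} ∩ C) = 0 := Iff.rfl

lemma frequently_aeOn {p : Ω → Prop} :
    (∃ᶠ ω in aeOn lam C, p ω) ↔ 0 < outer lam ({ω | p ω} ∩ C) := by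
  simp only [Filter.Frequently, eventually_aeOn, not_not, (outer_nonneg lam _).lt_iff_ne']

lemma mem_aeOn_iff_var_sdiff {B : Set Ω} (hB : B ∈ 𝒜.sets) (hC : C ∈ 𝒜.sets) :
    B ∈ aeOn lam C ↔ var lam (C \ B) = 0 := by
  rw [← outer_eq_var lam (𝒜.isSetAlgebra.sdiff_mem hC hB), sdiff_eq, inter_comm]
  exact Iff.rfl

namespace IsVarAtom

lemma neBot_aeOn (hC : IsVarAtom lam C) : (aeOn lam C).NeBot := by
  rw [← frequently_true_iff_neBot, frequently_aeOn, ofPred_true, univ_inter,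
    outer_eq_var lam hC.mem]
  exact hC.var_pos

lemma mem_or_compl_mem_aeOn (hC : IsVarAtom lam C) {B : Set Ω} (hB : B ∈ 𝒜.sets) :
    B ∈ aeOn lam C ∨ Bᶜ ∈ aeOn lam C := by
  rw [mem_aeOn_iff_var_sdiff hB hC.mem, mem_aeOn_iff_var_sdiff (𝒜.compl_mem hB) hC.mem,
    sdiff_compl, ← sdiff_inter_self_eq_sdiff, inter_comm B]
  exact (hC.null_or_null_sdiff _ (𝒜.isSetAlgebra.inter_mem hC.mem hB) inter_subset_left).symm

lemma eventually_of_outer_lt (hC : IsVarAtom lam C) {p : Ω → Prop}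
    (hp : outer lam {ω | ¬p ω} < var lam C) : ∀ᶠ ω in aeOn lam C, p ω := by
  obtain ⟨A, hA, hpA, hlt⟩ := exists_var_lt_of_outer_lt lam hp
  rcases hC.mem_or_compl_mem_aeOn hA with h | h
  · have hnull := (mem_aeOn_iff_var_sdiff hA hC.mem).1 h
    have hle := var_mono lam (𝒜.isSetAlgebra.inter_mem hC.mem hA) hA inter_subset_right
    linarith [var_inter_add_sdiff lam hC.mem hA]
  · filter_upwards [h] with ω hω
    exact not_not.1 fun hpω => hω (hpA hpω)

lemma exists_eventually_eq_of_isSimple (hC : IsVarAtom lam C) {s : Ω → ℝ} (hs : IsSimple 𝒜 s) :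
    ∃ r, ∀ᶠ ω in aeOn lam C, s ω = r := by
  have := hC.neBot_aeOn
  by_contra hcon
  have havoid : ∀ r ∈ range s, ∀ᶠ ω in aeOn lam C, s ω ≠ r := fun r _ =>
    (hC.mem_or_compl_mem_aeOn (hs.2 r)).resolve_left fun h => hcon ⟨r, h⟩
  obtain ⟨ω, hω⟩ := ((eventually_all_finite hs.1).2 havoid).exists
  exact hω (s ω) (mem_range_self ω) rfl

lemma exists_tendsto (hC : IsVarAtom lam C) (hf : f ∈ L0 lam) :
    ∃ x, Tendsto f (aeOn lam C) (𝓝 x) := by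
  have := hC.neBot_aeOn
  obtain ⟨s, hs, hconv⟩ := hf
  refine cauchy_map_iff_exists_tendsto.1 (Metric.cauchy_iff.2 ⟨inferInstance, fun ε hε => ?_⟩)
  obtain ⟨n, hn⟩ := ((hconv (ε / 3) (by positivity)).eventually_lt_const hC.var_pos).exists
  obtain ⟨r, hr⟩ := hC.exists_eventually_eq_of_isSimple (hs n)
  have hclose : ∀ᶠ ω in aeOn lam C, |s n ω - f ω| ≤ ε / 3 :=
    hC.eventually_of_outer_lt (by simpa only [not_le] using hn)
  refine ⟨Metric.closedBall r (ε / 3), mem_map.2 ?_, fun x hx y hy => ?_⟩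
  · filter_upwards [hr, hclose] with ω hωr hω
    rwa [mem_preimage, Metric.mem_closedBall', Real.dist_eq, ← hωr]
  · have := dist_triangle_right x y r
    linarith [Metric.mem_closedBall.1 hx, Metric.mem_closedBall.1 hy]

end IsVarAtom

/-- The almost constant value of `f` on the atom `C`; a junk value if `f` has no limit. -/
noncomputable def atomLim (lam : BAMeasure 𝒜) (C : Set Ω) (f : Ω → ℝ) : ℝ :=
  limUnder (aeOn lam C) f

lemma IsVarAtom.tendsto_atomLim (hC : IsVarAtom lam C) (hf : f ∈ L0 lam) :
    Tendsto f (aeOn lam C) (𝓝 (atomLim lam C f)) :=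
  tendsto_nhds_limUnder (hC.exists_tendsto hf)

lemma IsVarAtom.abs_atomLim_sub_le (hC : IsVarAtom lam C) (hf : f ∈ L0 lam) (hg : g ∈ L0 lam)
    {c : ℝ} (h : outer lam {ω | c ≤ |g ω - f ω|} < var lam C) :
    |atomLim lam C g - atomLim lam C f| ≤ c := by
  have := hC.neBot_aeOn
  have hlt : ∀ᶠ ω in aeOn lam C, |g ω - f ω| < c :=
    hC.eventually_of_outer_lt (by simpa only [not_lt] using h)
  exact le_of_tendsto ((hC.tendsto_atomLim hg).sub (hC.tendsto_atomLim hf)).abs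
    (hlt.mono fun _ => le_of_lt)

end Limits

/-! ### Positive functionals -/

section Functionals

variable {lam : BAMeasure 𝒜} {A B C : Set Ω} {φ ψ : (Ω → ℝ) → ℝ}

/-- `φ` is a continuous positive linear functional on `L⁰(λ)`. Its values outside `L⁰(λ)` are
irrelevant. -/
structure IsPositiveFunctional (lam : BAMeasure 𝒜) (φ : (Ω → ℝ) → ℝ) : Prop where
  linear : LinearOnL0 lam φ
  continuous : ContinuousOnL0 lam φ
  nonneg : ∀ f ∈ L0pos lam, 0 ≤ φ f

/-- `φ` is strictly positive at those `f ∈ L⁰(λ)₊` that do not vanish almost everywhere on `A`. -/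
def StrictlyPositiveOn (lam : BAMeasure 𝒜) (φ : (Ω → ℝ) → ℝ) (A : Set Ω) : Prop :=
  ∀ f ∈ L0pos lam, (∃ c > 0, 0 < outer lam ({ω | c < f ω} ∩ A)) → 0 < φ f

namespace IsPositiveFunctional

lemma zero (lam : BAMeasure 𝒜) : IsPositiveFunctional lam 0 where
  linear := by simp [LinearOnL0]
  continuous := fun _ _ ε hε => ⟨1, one_pos, fun _ _ _ => by simpa using hε⟩
  nonneg := fun _ _ => le_rfl

lemma add (hφ : IsPositiveFunctional lam φ) (hψ : IsPositiveFunctional lam ψ) :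
    IsPositiveFunctional lam (φ + ψ) where
  linear := by
    refine ⟨fun f hf g hg => ?_, fun a f hf => ?_⟩
    · simp only [Pi.add_apply, hφ.linear.1 f hf g hg, hψ.linear.1 f hf g hg]
      ring
    · simp only [Pi.add_apply, hφ.linear.2 a f hf, hψ.linear.2 a f hf]
      ring
  continuous := fun f hf ε hε => by
    obtain ⟨δ, hδ, hφδ⟩ := hφ.continuous f hf (ε / 2) (half_pos hε)
    obtain ⟨η, hη, hψη⟩ := hψ.continuous f hf (ε / 2) (half_pos hε)
    refine ⟨min δ η, lt_min hδ hη, fun g hg hlt => ?_⟩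
    have hφlt := hφδ g hg (hlt.trans_le (min_le_left _ _))
    have hψlt := hψη g hg (hlt.trans_le (min_le_right _ _))
    simp only [Pi.add_apply, add_sub_add_comm]
    linarith [abs_add_le (φ g - φ f) (ψ g - ψ f)]
  nonneg := fun f hf => add_nonneg (hφ.nonneg f hf) (hψ.nonneg f hf)

end IsPositiveFunctional

lemma IsVarAtom.isPositiveFunctional_atomLim (hC : IsVarAtom lam C) :
    IsPositiveFunctional lam (atomLim lam C) where
  linear := by
    have := hC.neBot_aeOn
    exact ⟨fun f hf g hg => ((hC.tendsto_atomLim hf).add (hC.tendsto_atomLim hg)).limUnder_eq,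
      fun a f hf => ((hC.tendsto_atomLim hf).const_mul a).limUnder_eq⟩
  continuous := fun f hf ε hε => by
    refine ⟨min ε (var lam C), lt_min hε hC.var_pos, fun g hg hlt => ?_⟩
    obtain ⟨c, hc, hclt⟩ := exists_add_outer_lt_of_dL0_lt lam hlt
    obtain ⟨hcε, hcC⟩ := lt_min_iff.1 hclt
    have hle := hC.abs_atomLim_sub_le hf hg ((lt_add_of_pos_left _ hc).trans hcC)
    linarith [outer_nonneg lam {ω | c ≤ |g ω - f ω|}]
  nonneg := fun f hf => by
    have := hC.neBot_aeOn
    exact ge_of_tendsto' (hC.tendsto_atomLim hf.1) hf.2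

lemma IsVarAtom.strictlyPositiveOn_atomLim (hC : IsVarAtom lam C) :
    StrictlyPositiveOn lam (atomLim lam C) C := by
  rintro f hf ⟨c, hc, hpos⟩
  exact hc.trans_le <| ge_of_tendsto_of_frequently (hC.tendsto_atomLim hf.1) <|
    (frequently_aeOn.2 hpos).mono fun _ => le_of_lt

lemma StrictlyPositiveOn.add (hφ : IsPositiveFunctional lam φ) (hψ : IsPositiveFunctional lam ψ)
    (hφA : StrictlyPositiveOn lam φ A) (hψB : StrictlyPositiveOn lam ψ B) :
    StrictlyPositiveOn lam (φ + ψ) (A ∪ B) := by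
  rintro f hf ⟨c, hc, hpos⟩
  rw [inter_union_distrib_left] at hpos
  have hsum : 0 + 0 < outer lam ({ω | c < f ω} ∩ A) + outer lam ({ω | c < f ω} ∩ B) := by
    simpa only [add_zero] using hpos.trans_le (outer_union_le lam _ _)
  rcases lt_or_lt_of_add_lt_add hsum with hA | hB
  · exact add_pos_of_pos_of_nonneg (hφA f hf ⟨c, hc, hA⟩) (hψ.nonneg f hf)
  · exact add_pos_of_nonneg_of_pos (hφ.nonneg f hf) (hψB f hf ⟨c, hc, hB⟩)

theorem FinitelyAtomic.exists_strictlyPositiveOn (hA : FinitelyAtomic lam A) :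
    ∃ φ, IsPositiveFunctional lam φ ∧ StrictlyPositiveOn lam φ A := by
  induction hA with
  | null hA hnull =>
    refine ⟨0, .zero lam, ?_⟩
    rintro f - ⟨c, -, hpos⟩
    exact absurd (hpos.trans_le (outer_le_var lam hA inter_subset_right)) hnull.not_gt
  | @atom C hC =>
    exact ⟨atomLim lam C, hC.isPositiveFunctional_atomLim, hC.strictlyPositiveOn_atomLim⟩
  | union _ _ _ ihA ihB =>
    obtain ⟨φ, hφ, hφA⟩ := ihA
    obtain ⟨ψ, hψ, hψB⟩ := ihB
    exact ⟨φ + ψ, hφ.add hψ, hφA.add hφ hψ hψB⟩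

lemma StrictlyPositiveOn.pos_indicator (hφ : StrictlyPositiveOn lam φ univ) (hA : A ∈ 𝒜.sets)
    (hpos : 0 < var lam A) : 0 < φ (A.indicator 1) := by
  have hL0 : A.indicator 1 ∈ L0 lam := (IsSimple.indicator_const hA 1).mem_L0 lam
  refine hφ _ ⟨hL0, indicator_nonneg fun _ _ => zero_le_one⟩ ⟨1 / 2, by norm_num, ?_⟩
  have hset : {ω | (1 / 2 : ℝ) < A.indicator 1 ω} = A := by
    ext ω
    by_cases hω : ω ∈ A <;> norm_num [hω]
  rwa [hset, inter_univ, outer_eq_var lam hA]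

theorem StrictlyPositiveOn.hasVariationGap (hpos : StrictlyPositiveOn lam φ univ)
    (hlin : LinearOnL0 lam φ) (hcont : ContinuousOnL0 lam φ) : HasVariationGap lam := by
  have hzero : φ 0 = 0 := by simpa using hlin.2 0 0 (zero_mem_L0 lam)
  obtain ⟨δ, hδ, hφδ⟩ := hcont 0 (zero_mem_L0 lam) 1 one_pos
  refine ⟨δ, hδ, fun A hA hlt => by_contra fun hne => ?_⟩
  have hφA := hpos.pos_indicator hA ((var_nonneg lam A).lt_of_ne' hne)
  have hsimple (a : ℝ) : A.indicator (fun _ => a) ∈ L0 lam :=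
    (IsSimple.indicator_const hA a).mem_L0 lam
  set a := (φ (A.indicator 1))⁻¹
  have hone : φ (A.indicator fun _ => a) = 1 := by
    have hsmul : (A.indicator fun _ => a) = a • A.indicator 1 := by
      ext ω
      by_cases hω : ω ∈ A <;> simp [hω]
    rw [hsmul, hlin.2 a (A.indicator 1) (hsimple 1)]
    exact inv_mul_cancel₀ hφA.ne'
  have hclose : dL0 lam (A.indicator fun _ => a) 0 < δ := calc
    dL0 lam (A.indicator fun _ => a) 0
      ≤ outer lam {ω | A.indicator (fun _ => a) ω ≠ 0} := dL0_le_outer_ne lam _ _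
    _ ≤ var lam A := outer_le_var lam hA support_indicator_subset
    _ < δ := hlt
  simpa [hone, hzero] using hφδ _ (hsimple a) hclose

end Functionals

/-- Corollary 5: `L⁰(λ)` admits a continuous, strictly positive linear functional if and
only if `λ ∈ ba₀(𝒜)`. -/
theorem stmt_2 {Ω : Type*} {𝒜 : SetAlg Ω} (lam : BAMeasure 𝒜) :
    (∃ φ : (Ω → ℝ) → ℝ, LinearOnL0 lam φ ∧ ContinuousOnL0 lam φ ∧
      (∀ f ∈ L0pos lam, 0 ≤ φ f) ∧
      (∀ f ∈ L0pos lam, (∃ c > (0:ℝ), 0 < outer lam {ω | c < f ω}) → 0 < φ f)) ↔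
    FiniteRange lam := by
  constructor
  · rintro ⟨φ, hlin, hcont, -, hpos⟩
    have hpos' : StrictlyPositiveOn lam φ univ := by
      simpa only [StrictlyPositiveOn, inter_univ] using hpos
    have hatomic := (hpos'.hasVariationGap hlin hcont).finitelyAtomic 𝒜.isSetAlgebra.univ_mem
    simpa only [FiniteRange, valuesOn_univ] using hatomic.finite_valuesOn
  · intro hfin
    obtain ⟨φ, hφ, hpos⟩ :=
      (hfin.hasVariationGap.finitelyAtomic 𝒜.isSetAlgebra.univ_mem).exists_strictlyPositiveOn
    refine ⟨φ, hφ.linear, hφ.continuous, hφ.nonneg, ?_⟩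
    simpa only [StrictlyPositiveOn, inter_univ] using hpos

end FA
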